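/- Let k ∈ {1,2}. There exist δ₀ > 0, ε₀ > 0 and C > 0 such that for every δ ∈ (0, δ₀], every z ∈ K, every ζ' ∈ ℝ × ℝ^n and every t̂ ∈ ℝ × ℝ^n × ℝ with t̂_{ξd} ≥ 0 and |t̂'| ≤ ε₀ t̂_{ξd}: if μ̂_k(z,ζ',t̂) ≥ −δ λ̂⁴, then |t̂| ≤ C |ζ'|. -/

import Mathlib

/-- `m̂_k(z,ζ',t̂) = (-1)^k i (σ + i t̂_σ)² + r_z(ξ' + i t̂_{ξ'})`, where `r_z` is the
complex-bilinear extension of the quadratic form with coefficient matrix `R`. -/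
noncomputable def mhat {n : ℕ} (R : Fin n → Fin n → ℝ) (k : ℕ)
    (σ : ℝ) (ξ : Fin n → ℝ) (tσ : ℝ) (tξ : Fin n → ℝ) : ℂ :=
  (-1 : ℂ) ^ k * Complex.I * ((σ : ℂ) + Complex.I * (tσ : ℂ)) ^ 2 +
    ∑ j, ∑ l, (R j l : ℂ) * ((ξ j : ℂ) + Complex.I * (tξ j : ℂ)) *
      ((ξ l : ℂ) + Complex.I * (tξ l : ℂ))

/-- `μ̂_k = 4 t̂_{ξd}² Re m̂_k − 4 t̂_{ξd}⁴ + (Im m̂_k)²`. -/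
noncomputable def muhat {n : ℕ} (R : Fin n → Fin n → ℝ) (k : ℕ)
    (σ : ℝ) (ξ : Fin n → ℝ) (tσ : ℝ) (tξ : Fin n → ℝ) (tξd : ℝ) : ℝ :=
  4 * tξd ^ 2 * (mhat R k σ ξ tσ tξ).re - 4 * tξd ^ 4 + (mhat R k σ ξ tσ tξ).im ^ 2

/-!
Put `S = t̂_{ξd}²`, `Z = |ζ'|²`, `T = |t̂'|²`. Each `m̂_k` is a quadratic polynomial with bounded
coefficients, so `|m̂_k| ≤ B (Z + T)` with one constant `B ≥ 1`. If `S` dominates both `4 B Z` and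
`4 B T`, then `|m̂_k| ≤ S / 2`, and the term `-4 S²` wins: `μ̂_k ≤ -(7/4) S²`, whereas
`λ̂⁴ = (T + S + Z)² ≤ (9/4) S²`. Hence `μ̂_k ≥ -δ λ̂⁴` with `δ ≤ 1/2` is only possible when
`S ≤ 4 B Z`, and `|t̂|² = T + S` is then controlled by `Z` as well.
-/

lemma norm_sum_sum_mul_mul_le {ι κ 𝕜 : Type*} [Fintype ι] [Fintype κ] [NonUnitalSeminormedRing 𝕜]
    {A : ι → κ → 𝕜} {M : ℝ} (hA : ∀ i j, ‖A i j‖ ≤ M) (v : ι → 𝕜) (w : κ → 𝕜) :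
    ‖∑ i, ∑ j, A i j * v i * w j‖ ≤ M * ((∑ i, ‖v i‖) * ∑ j, ‖w j‖) := by
  have norm_term_le (i : ι) (j : κ) : ‖A i j * v i * w j‖ ≤ M * (‖v i‖ * ‖w j‖) :=
    calc ‖A i j * v i * w j‖ ≤ ‖A i j‖ * ‖v i‖ * ‖w j‖ := norm_mul₃_le
      _ = ‖A i j‖ * (‖v i‖ * ‖w j‖) := mul_assoc _ _ _
      _ ≤ M * (‖v i‖ * ‖w j‖) := by gcongr; exact hA i j
  calc ‖∑ i, ∑ j, A i j * v i * w j‖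
      ≤ ∑ i, ∑ j, M * (‖v i‖ * ‖w j‖) :=
        norm_sum_le_of_le _ fun i _ => norm_sum_le_of_le _ fun j _ => norm_term_le i j
    _ = M * ((∑ i, ‖v i‖) * ∑ j, ‖w j‖) := by
        rw [Finset.sum_mul_sum]
        simp only [Finset.mul_sum]

lemma sq_norm_ofReal_add_I_mul_ofReal (x y : ℝ) :
    ‖(x : ℂ) + Complex.I * (y : ℂ)‖ ^ 2 = x ^ 2 + y ^ 2 := by
  rw [mul_comm, Complex.sq_norm, Complex.normSq_add_mul_I]

lemma norm_complexified_quadraticForm_le {ι : Type*} [Fintype ι] (R : ι → ι → ℝ) (ξ τ : ι → ℝ) :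
    ‖∑ j, ∑ l, (R j l : ℂ) * ((ξ j : ℂ) + Complex.I * (τ j : ℂ)) *
        ((ξ l : ℂ) + Complex.I * (τ l : ℂ))‖ ≤
      Fintype.card ι * ‖R‖ * (∑ j, ξ j ^ 2 + ∑ j, τ j ^ 2) := by
  set w : ι → ℂ := fun j => (ξ j : ℂ) + Complex.I * (τ j : ℂ)
  have norm_entry_le (j l : ι) : ‖(R j l : ℂ)‖ ≤ ‖R‖ := by
    rw [Complex.norm_real]
    exact (norm_le_pi_norm (R j) l).trans (norm_le_pi_norm R j)
  have sum_sq_norm : ∑ j, ‖w j‖ ^ 2 = ∑ j, ξ j ^ 2 + ∑ j, τ j ^ 2 := by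
    simp only [w, sq_norm_ofReal_add_I_mul_ofReal, Finset.sum_add_distrib]
  calc ‖∑ j, ∑ l, (R j l : ℂ) * w j * w l‖
      ≤ ‖R‖ * ((∑ j, ‖w j‖) * ∑ j, ‖w j‖) := norm_sum_sum_mul_mul_le norm_entry_le w w
    _ = ‖R‖ * (∑ j, ‖w j‖) ^ 2 := by rw [sq]
    _ ≤ ‖R‖ * (Fintype.card ι * ∑ j, ‖w j‖ ^ 2) := by
        gcongr
        exact sq_sum_le_card_mul_sum_sq
    _ = Fintype.card ι * ‖R‖ * (∑ j, ξ j ^ 2 + ∑ j, τ j ^ 2) := by rw [sum_sq_norm]; ring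

lemma norm_mhat_le {n : ℕ} (R : Fin n → Fin n → ℝ) (k : ℕ)
    (σ : ℝ) (ξ : Fin n → ℝ) (tσ : ℝ) (tξ : Fin n → ℝ) :
    ‖mhat R k σ ξ tσ tξ‖ ≤
      (n * ‖R‖ + 1) * ((σ ^ 2 + ∑ j, ξ j ^ 2) + (tσ ^ 2 + ∑ j, tξ j ^ 2)) := by
  have norm_time_part :
      ‖(-1 : ℂ) ^ k * Complex.I * ((σ : ℂ) + Complex.I * (tσ : ℂ)) ^ 2‖ = σ ^ 2 + tσ ^ 2 := by
    simp [sq_norm_ofReal_add_I_mul_ofReal]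
  have norm_space_part_le := norm_complexified_quadraticForm_le R ξ tξ
  rw [Fintype.card_fin] at norm_space_part_le
  have time_nonneg : 0 ≤ n * ‖R‖ * (σ ^ 2 + tσ ^ 2) := by positivity
  have space_nonneg : 0 ≤ ∑ j, ξ j ^ 2 + ∑ j, tξ j ^ 2 := by positivity
  calc ‖mhat R k σ ξ tσ tξ‖
      ≤ (σ ^ 2 + tσ ^ 2) + n * ‖R‖ * (∑ j, ξ j ^ 2 + ∑ j, tξ j ^ 2) :=
        (norm_add_le _ _).trans (add_le_add norm_time_part.le norm_space_part_le)
    _ ≤ (n * ‖R‖ + 1) * ((σ ^ 2 + ∑ j, ξ j ^ 2) + (tσ ^ 2 + ∑ j, tξ j ^ 2)) := by linarith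

lemma mul_re_sub_sq_add_im_sq_le_of_norm_le {m : ℂ} {S : ℝ} (hm : ‖m‖ ≤ S / 2) :
    4 * S * m.re - 4 * S ^ 2 + m.im ^ 2 ≤ -(7 / 4) * S ^ 2 := by
  have S_nonneg : 0 ≤ S := by linarith [norm_nonneg m]
  have re_le : S * m.re ≤ S * (S / 2) := by
    gcongr
    exact (Complex.re_le_norm m).trans hm
  have im_sq_le : m.im ^ 2 ≤ (S / 2) ^ 2 :=
    sq_le_sq.2 (((Complex.abs_im_le_norm m).trans hm).trans (le_abs_self _))
  linarith

lemma le_of_neg_mul_sq_le_mul_re_sub_sq_add_im_sq {m : ℂ} {B S T Z δ : ℝ} (hB : 1 ≤ B)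
    (hT : 0 ≤ T) (hZ : 0 ≤ Z) (hδ : δ ≤ 1 / 2) (hTS : 4 * B * T ≤ S) (hm : ‖m‖ ≤ B * (Z + T))
    (h : -δ * (T + S + Z) ^ 2 ≤ 4 * S * m.re - 4 * S ^ 2 + m.im ^ 2) :
    S ≤ 4 * B * Z := by
  by_contra! hZS
  have S_pos : 0 < S := lt_of_le_of_lt (by positivity) hZS
  have norm_le : ‖m‖ ≤ S / 2 := by linarith
  have add_le : Z + T ≤ S / 2 :=
    (le_mul_of_one_le_left (add_nonneg hZ hT) hB).trans (by linarith)
  have weight_le : δ * (T + S + Z) ^ 2 ≤ 1 / 2 * (3 / 2 * S) ^ 2 := by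
    gcongr
    linarith
  have upper_bound := mul_re_sub_sq_add_im_sq_le_of_norm_le norm_le
  have S_sq_pos : 0 < S ^ 2 := by positivity
  linarith

lemma four_mul_mul_le_sq_of_sqrt_le {B T s : ℝ} (hB : 1 ≤ B) (hT : 0 ≤ T)
    (h : √T ≤ 1 / (2 * B) * s) : 4 * B * T ≤ s ^ 2 := by
  have T_le : T ≤ (1 / (2 * B) * s) ^ 2 := (Real.sqrt_le_iff.1 h).2
  calc 4 * B * T ≤ 4 * B ^ 2 * T := by
        gcongr
        exact le_self_pow₀ hB two_ne_zero
    _ ≤ 4 * B ^ 2 * (1 / (2 * B) * s) ^ 2 := by gcongr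
    _ = s ^ 2 := by field_simp; norm_num

lemma sqrt_add_le_mul_sqrt {B S T Z : ℝ} (hB : 1 ≤ B) (hT : 0 ≤ T) (hZ : 0 ≤ Z)
    (hTS : 4 * B * T ≤ S) (hSZ : S ≤ 4 * B * Z) : √(T + S) ≤ 4 * B * √Z := by
  refine Real.sqrt_le_iff.2 ⟨by positivity, ?_⟩
  have T_le : T ≤ S := (le_mul_of_one_le_left hT (by linarith)).trans hTS
  calc T + S ≤ 8 * B * Z := by linarith
    _ ≤ 16 * B ^ 2 * Z := by
        gcongr ?_ * Z
        nlinarith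
    _ = (4 * B * √Z) ^ 2 := by rw [mul_pow, Real.sq_sqrt hZ]; ring

theorem stmt13_general (n : ℕ) {𝓡 : Set (Fin n → Fin n → ℝ)} (h𝓡 : Bornology.IsBounded 𝓡) :
    ∃ δ₀ > 0, ∃ ε₀ > 0, ∃ C > 0, ∀ δ ≤ δ₀, ∀ R ∈ 𝓡,
      ∀ (k : ℕ) (σ : ℝ) (ξ : Fin n → ℝ) (tσ : ℝ) (tξ : Fin n → ℝ) (tξd : ℝ),
        √(tσ ^ 2 + ∑ j, tξ j ^ 2) ≤ ε₀ * tξd →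
        -δ * √((tσ ^ 2 + ∑ j, tξ j ^ 2 + tξd ^ 2) + (σ ^ 2 + ∑ j, ξ j ^ 2)) ^ 4 ≤
          muhat R k σ ξ tσ tξ tξd →
        √(tσ ^ 2 + ∑ j, tξ j ^ 2 + tξd ^ 2) ≤ C * √(σ ^ 2 + ∑ j, ξ j ^ 2) := by
  obtain ⟨M, M_pos, norm_le_M⟩ := h𝓡.exists_pos_norm_le
  set B : ℝ := n * M + 1
  have one_le_B : 1 ≤ B := le_add_of_nonneg_left (by positivity)
  refine ⟨1 / 2, by norm_num, 1 / (2 * B), by positivity, 4 * B, by positivity, ?_⟩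
  intro δ hδ R hR k σ ξ tσ tξ tξd hε hμ
  have norm_mhat_le_B : ‖mhat R k σ ξ tσ tξ‖ ≤
      B * ((σ ^ 2 + ∑ j, ξ j ^ 2) + (tσ ^ 2 + ∑ j, tξ j ^ 2)) := by
    refine (norm_mhat_le R k σ ξ tσ tξ).trans ?_
    have coeff_le : n * ‖R‖ + 1 ≤ n * M + 1 := by
      gcongr
      exact norm_le_M R hR
    gcongr
  set T := tσ ^ 2 + ∑ j, tξ j ^ 2
  set Z := σ ^ 2 + ∑ j, ξ j ^ 2
  have T_nonneg : 0 ≤ T := by positivity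
  have Z_nonneg : 0 ≤ Z := by positivity
  have T_small : 4 * B * T ≤ tξd ^ 2 := four_mul_mul_le_sq_of_sqrt_le one_le_B T_nonneg hε
  have weight_eq : √(T + tξd ^ 2 + Z) ^ 4 = (T + tξd ^ 2 + Z) ^ 2 := by
    rw [pow_mul _ 2 2, Real.sq_sqrt (by positivity)]
  rw [weight_eq, muhat, show tξd ^ 4 = (tξd ^ 2) ^ 2 by ring] at hμ
  exact sqrt_add_le_mul_sqrt one_le_B T_nonneg Z_nonneg T_small <|
    le_of_neg_mul_sq_le_mul_re_sub_sq_add_im_sq one_le_B T_nonneg Z_nonneg hδ T_small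
      norm_mhat_le_B hμ

/-- If `|t̂'| ≤ ε₀ t̂_{ξd}` and `μ̂_k ≥ −δ λ̂⁴` with `δ ≤ δ₀` small, then `|t̂| ≤ C |ζ'|`. -/
theorem stmt13 (n : ℕ) (K : Type*) [MetricSpace K] [CompactSpace K]
    (R : K → Fin n → Fin n → ℝ)
    (hRcont : ∀ j l, Continuous fun z => R z j l)
    (c : ℝ) (hc : 0 < c)
    (hpd : ∀ (z : K) (η : Fin n → ℝ), c * (∑ j, (η j) ^ 2) ≤ ∑ j, ∑ l, R z j l * η j * η l)
    (k : ℕ) (hk : k = 1 ∨ k = 2) :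
    ∃ δ₀ > 0, ∃ ε₀ > 0, ∃ C > 0,
      ∀ δ : ℝ, 0 < δ → δ ≤ δ₀ →
      ∀ (z : K) (σ : ℝ) (ξ : Fin n → ℝ) (tσ : ℝ) (tξ : Fin n → ℝ) (tξd : ℝ),
        0 ≤ tξd →
        Real.sqrt (tσ ^ 2 + ∑ j, (tξ j) ^ 2) ≤ ε₀ * tξd →
        -δ * (Real.sqrt ((tσ ^ 2 + (∑ j, (tξ j) ^ 2) + tξd ^ 2) +
            (σ ^ 2 + ∑ j, (ξ j) ^ 2))) ^ 4 ≤ muhat (R z) k σ ξ tσ tξ tξd →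
        Real.sqrt (tσ ^ 2 + (∑ j, (tξ j) ^ 2) + tξd ^ 2) ≤
          C * Real.sqrt (σ ^ 2 + ∑ j, (ξ j) ^ 2) := by
  have hR : Continuous R := continuous_pi fun j => continuous_pi (hRcont j)
  obtain ⟨δ₀, hδ₀, ε₀, hε₀, C, hC, h⟩ := stmt13_general n (isCompact_range hR).isBounded
  exact ⟨δ₀, hδ₀, ε₀, hε₀, C, hC, fun δ _ hδ z σ ξ tσ tξ tξd _ =>
    h δ hδ (R z) ⟨z, rfl⟩ k σ ξ tσ tξ tξd⟩
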